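/- Let 𝔢 be a dispersion relation of class C⁴ satisfying condition (M) and let V be a potential with Φ_{1,2}(V) < ∞. Then the eigenvalues of H(𝔢,V) can only accumulate at points of Thr(𝔢): for every compact set Δ ⊂ ℝ with Δ ∩ Thr(𝔢) = ∅, the sum over eigenvalues λ ∈ Δ of H(𝔢,V) of the dimensions of the corresponding eigenspaces is finite. -/

import Mathlib

open MeasureTheory Complex Real
open scoped ENNReal

noncomputable section

namespace LatSch

/-- The lattice `Γ = ℤ^d`. -/
abbrev Γd (d : ℕ) := Fin d → ℤ

/-- The Hilbert space `ℓ²(Γ)`. -/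
abbrev L2 (d : ℕ) := lp (fun _ : Γd d => ℂ) 2

/-- Euclidean norm of a lattice point. -/
def lnorm {d : ℕ} (x : Γd d) : ℝ := Real.sqrt (∑ i, ((x i : ℝ)) ^ 2)

/-- The standard basis vector `δ_x` of `ℓ²(Γ)`. -/
def delta {d : ℕ} (x : Γd d) : L2 d := lp.single 2 x 1

local notation "⟪" a ", " b "⟫" => @inner ℂ _ _ a b

/-- The cube `[-π, π]^d`, a fundamental domain of the torus. -/
def torusBox (d : ℕ) : Set (Fin d → ℝ) := Set.univ.pi fun _ => Set.Icc (-π) π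

/-- `⟨p, m⟩` for `p ∈ ℝ^d`, `m ∈ ℤ^d`. -/
def dotZ {d : ℕ} (p : Fin d → ℝ) (m : Γd d) : ℝ := ∑ i, p i * (m i : ℝ)

/-- Fourier coefficient `f̂(m) = (2π)^{-d} ∫_{[-π,π]^d} f(p) e^{i⟨p,m⟩} dp`. -/
def fCoeff {d : ℕ} (f : (Fin d → ℝ) → ℝ) (m : Γd d) : ℂ :=
  ((1 / (2 * π) ^ d : ℝ) : ℂ) *
    ∫ p in torusBox d, (f p : ℂ) * Complex.exp (Complex.I * (dotZ p m : ℝ))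

/-- `H` is the Fourier multiplier (hopping matrix) `h(f)`, characterized by its
matrix elements `⟨δ_x, H δ_y⟩ = f̂(x - y)`. -/
def IsMultiplier {d : ℕ} (f : (Fin d → ℝ) → ℝ) (H : L2 d →L[ℂ] L2 d) : Prop :=
  ∀ x y : Γd d, ⟪delta x, H (delta y)⟫ = fCoeff f (x - y)

/-- `M` is the operator of multiplication by the potential `V`. -/
def IsMulOp {d : ℕ} (V : Γd d → ℝ) (M : L2 d →L[ℂ] L2 d) : Prop :=
  ∀ (ψ : L2 d) (x : Γd d), (M ψ : ∀ _ : Γd d, ℂ) x = (V x : ℂ) * (ψ : ∀ _ : Γd d, ℂ) x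

/-- Partial derivative `∂_{p_k} f (p)`. -/
def pd {d : ℕ} (f : (Fin d → ℝ) → ℝ) (k : Fin d) (p : Fin d → ℝ) : ℝ :=
  fderiv ℝ f p (Pi.single k 1)

/-- `|∇f|²(p) = Σ_k (∂_{p_k} f(p))²`. -/
def gradSq {d : ℕ} (f : (Fin d → ℝ) → ℝ) (p : Fin d → ℝ) : ℝ := ∑ k, pd f k p ^ 2

/-- The Hessian matrix of `f` at `p`. -/
def hess {d : ℕ} (f : (Fin d → ℝ) → ℝ) (p : Fin d → ℝ) : Matrix (Fin d) (Fin d) ℝ :=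
  Matrix.of fun i j => fderiv ℝ (fun q => fderiv ℝ f q (Pi.single j 1)) p (Pi.single i 1)

/-- All critical points of `f` are nondegenerate (`f` is a Morse function). -/
def IsMorse {d : ℕ} (f : (Fin d → ℝ) → ℝ) : Prop :=
  ∀ p, fderiv ℝ f p = 0 → (hess f p).det ≠ 0

/-- `2πℤ^d`-periodicity. -/
def Periodic2pi {d : ℕ} (f : (Fin d → ℝ) → ℝ) : Prop :=
  ∀ (p : Fin d → ℝ) (m : Γd d), f (p + fun i => 2 * π * (m i : ℝ)) = f p

/-- A dispersion relation: a `2πℤ^d`-periodic function with minimum `0`. -/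
def IsDispersion {d : ℕ} (f : (Fin d → ℝ) → ℝ) : Prop :=
  Periodic2pi f ∧ (∀ p, 0 ≤ f p) ∧ (∃ p, f p = 0)

/-- Condition (M): `𝔢` and `|∇𝔢|²` are Morse functions. -/
def CondM {d : ℕ} (f : (Fin d → ℝ) → ℝ) : Prop := IsMorse f ∧ IsMorse (gradSq f)

/-- `Φ_{m,n}(V) = (Σ_x |V(x)|^{1/m} (1+|x|)^n)^m`, valued in `[0,∞]`. -/
def Phi {d : ℕ} (m n : ℕ) (V : Γd d → ℝ) : ℝ≥0∞ :=
  (∑' x : Γd d, ENNReal.ofReal (|V x| ^ ((1 : ℝ) / m) * (1 + lnorm x) ^ n)) ^ m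

/-- The set of eigenvectors of `H` (with real eigenvalue). -/
def eigvecs {d : ℕ} (H : L2 d →L[ℂ] L2 d) : Set (L2 d) :=
  {ψ : L2 d | ψ ≠ 0 ∧ ∃ μ : ℝ, H ψ = (μ : ℂ) • ψ}

/-- `N_pp[H]`: the Hilbert-space dimension of the closed linear span of all
eigenvectors of `H`. -/
def Npp {d : ℕ} (H : L2 d →L[ℂ] L2 d) : Cardinal :=
  Module.rank ℂ ((Submodule.span ℂ (eigvecs H)).topologicalClosure)

/-- The Fourier transform `ĝ_x(p) = (i/2·|∇𝔢(p)|² + ⟨∇𝔢(p), x⟩) e^{-i⟨p,x⟩}`. -/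
def ghat {d : ℕ} (e : (Fin d → ℝ) → ℝ) (x : Γd d) (p : Fin d → ℝ) : ℂ :=
  ((Complex.I / 2) * ((gradSq e p : ℝ) : ℂ) + ((∑ k, pd e k p * (x k : ℝ) : ℝ) : ℂ)) *
    Complex.exp (-(Complex.I * (dotZ p x : ℝ)))

/-- `g : Γ → ℓ²(Γ)` is the family of vectors `g_x` with Fourier transform `ĝ_x`. -/
def IsGVec {d : ℕ} (e : (Fin d → ℝ) → ℝ) (g : Γd d → L2 d) : Prop :=
  ∀ x m : Γd d,
    (g x : ∀ _ : Γd d, ℂ) m =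
      ((1 / (2 * π) ^ d : ℝ) : ℂ) *
        ∫ p in torusBox d, ghat e x p * Complex.exp (Complex.I * (dotZ p m : ℝ))

/-- `C` is the bounded self-adjoint realization
`C_V = Σ_x i V(x) (|δ_x⟩⟨g_x| - |g_x⟩⟨δ_x|)` of the commutator `i[V, A(𝔢)]`. -/
def IsCommOp {d : ℕ} (V : Γd d → ℝ) (g : Γd d → L2 d) (C : L2 d →L[ℂ] L2 d) : Prop :=
  ∀ ψ : L2 d,
    HasSum (fun x : Γd d =>
      (Complex.I * (V x : ℂ)) • (⟪g x, ψ⟫ • delta x - ⟪delta x, ψ⟫ • g x)) (C ψ)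

/-- `R` is the resolvent `(z - H)^{-1}`. -/
def IsResolventAt {d : ℕ} (H : L2 d →L[ℂ] L2 d) (z : ℂ) (R : L2 d →L[ℂ] L2 d) : Prop :=
  R.comp (z • (1 : L2 d →L[ℂ] L2 d) - H) = 1 ∧ (z • (1 : L2 d →L[ℂ] L2 d) - H).comp R = 1

/-- `‖f‖_{C^m} ≤ C`: all partial derivatives of order `≤ m` are bounded by `C`. -/
def CmNormLe {d : ℕ} (m : ℕ) (f : (Fin d → ℝ) → ℝ) (C : ℝ) : Prop :=
  ∀ j : ℕ, j ≤ m → ∀ (p : Fin d → ℝ) (k : Fin j → Fin d),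
    |iteratedFDeriv ℝ j f p (fun i => Pi.single (k i) 1)| ≤ C

/-- `K(𝔢) ≥ K`: at every critical point, every eigenvalue `λ` of the Hessian
satisfies `|λ|^{1/2} ≥ K`. -/
def MinCurvGe {d : ℕ} (f : (Fin d → ℝ) → ℝ) (K : ℝ) : Prop :=
  ∀ p, fderiv ℝ f p = 0 → ∀ (lam : ℝ) (v : Fin d → ℝ), v ≠ 0 →
    (hess f p).mulVec v = lam • v → K ^ 2 ≤ |lam|

/-- The set of thresholds `Thr(𝔢) = 𝔢(Crit(𝔢))`. -/
def Thr {d : ℕ} (f : (Fin d → ℝ) → ℝ) : Set ℝ := f '' {p | fderiv ℝ f p = 0}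


/-- The number of strictly negative eigenvalues of `C`, counted with multiplicity:
the dimension of the span of eigenvectors with strictly negative eigenvalue. -/
def NegCount {d : ℕ} (C : L2 d →L[ℂ] L2 d) : Cardinal :=
  Module.rank ℂ (Submodule.span ℂ
    {ψ : L2 d | ψ ≠ 0 ∧ ∃ μ : ℝ, μ < 0 ∧ C ψ = (μ : ℂ) • ψ})

/-- The number of strictly positive eigenvalues of `C`, counted with multiplicity. -/
def PosCount {d : ℕ} (C : L2 d →L[ℂ] L2 d) : Cardinal :=
  Module.rank ℂ (Submodule.span ℂ
    {ψ : L2 d | ψ ≠ 0 ∧ ∃ μ : ℝ, 0 < μ ∧ C ψ = (μ : ℂ) • ψ})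

/-! If the eigenvalues in a closed set `Δ` had infinite total multiplicity, there would be an
orthonormal sequence `ψ n` of eigenvectors whose eigenvalues `μ n` converge to some `μ₀ ∈ Δ`. In
momentum space the densities `|ψ n|²` concentrate, along a subsequence, on a probability measure
on the torus. This measure is supported where `e = μ₀`: as `ψ n` tends to zero weakly and `V`
vanishes at infinity, `V ψ n → 0`, hence `(h(e) - μ₀) ψ n → 0`. It is also supported where `∇e =
0`: conjugating the eigenvalue equation by the phase `x ↦ e^{iεx_k}` translates the symbol, and
dividing the difference by `ε → 0` gives the virial identity, which bounds `⟪ψ n, (∂_k e) b ψ n⟫`,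
for every character `b` of the torus, by a multiple of `‖(1 + |x|) V ψ n‖`; this tends to zero
because `(1 + |x|) V` does. So `μ₀` is a critical value of `e`.

To avoid extracting a limit measure, its support is replaced by the zero set of the ideal of
symbols `g` with `⟪ψ n, g b ψ n⟫ → 0` for all symbols `b`. The ideal is proper because `ψ n` has
norm one, so its elements have a common zero on the torus. -/

section MultiplicationOperators

variable {X : Type*} [TopologicalSpace X] [CompactSpace X] [MeasurableSpace X] [BorelSpace X]
  (μ : Measure X) [IsFiniteMeasure μ]

/-- Multiplication of `L²` functions by a continuous function. -/
def mulL2CLM (g : C(X, ℂ)) : Lp ℂ 2 μ →L[ℂ] Lp ℂ 2 μ :=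
  (ContinuousLinearMap.mul ℂ ℂ).holderL μ ∞ 2 2 (ContinuousMap.toLp ∞ μ ℂ g)

lemma mulL2CLM_ae_eq (g : C(X, ℂ)) (f : Lp ℂ 2 μ) : mulL2CLM μ g f =ᵐ[μ] fun t ↦ g t * f t := by
  have hholder : mulL2CLM μ g f =ᵐ[μ] _ := (ContinuousLinearMap.mul ℂ ℂ).coeFn_holder (r := 2)
    (ContinuousMap.toLp ∞ μ ℂ g) f
  filter_upwards [hholder, ContinuousMap.coeFn_toLp (p := ∞) (𝕜 := ℂ) μ g] with t ht hg
  rw [ht, hg, ContinuousLinearMap.mul_apply']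

lemma mulL2CLM_star (g : C(X, ℂ)) : mulL2CLM μ (star g) = star (mulL2CLM μ g) := by
  rw [ContinuousLinearMap.star_eq_adjoint, ContinuousLinearMap.eq_adjoint_iff]
  intro f₁ f₂
  rw [L2.inner_def, L2.inner_def]
  refine integral_congr_ae ?_
  filter_upwards [mulL2CLM_ae_eq μ (star g) f₁, mulL2CLM_ae_eq μ g f₂] with t h₁ h₂
  simp only [h₁, h₂, RCLike.inner_apply, ContinuousMap.star_apply, map_mul, RCLike.star_def,
    RCLike.conj_conj]
  ring

/-- The representation of the C⋆-algebra `C(X)` on `L²(X)` by multiplication operators. -/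
def mulL2 : C(X, ℂ) →⋆ₐ[ℂ] (Lp ℂ 2 μ →L[ℂ] Lp ℂ 2 μ) where
  toFun := mulL2CLM μ
  map_one' := by
    ext1 f
    refine Lp.ext ?_
    filter_upwards [mulL2CLM_ae_eq μ 1 f] with t ht
    simp [ht]
  map_mul' g₁ g₂ := by
    ext1 f
    refine Lp.ext ?_
    filter_upwards [mulL2CLM_ae_eq μ (g₁ * g₂) f, mulL2CLM_ae_eq μ g₁ (mulL2CLM μ g₂ f),
      mulL2CLM_ae_eq μ g₂ f] with t h h₁ h₂
    simp [h, h₁, h₂, mul_assoc]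
  map_zero' := by simp [mulL2CLM]
  map_add' := by simp [mulL2CLM]
  commutes' c := by
    ext1 f
    refine Lp.ext ?_
    filter_upwards [mulL2CLM_ae_eq μ (algebraMap ℂ _ c) f, Lp.coeFn_smul c f] with t h hc
    exact h.trans hc.symm
  map_star' := mulL2CLM_star μ

lemma mulL2_toLp (g f : C(X, ℂ)) :
    mulL2 μ g (ContinuousMap.toLp 2 μ ℂ f) = ContinuousMap.toLp 2 μ ℂ (g * f) := by
  refine Lp.ext ?_
  filter_upwards [mulL2CLM_ae_eq μ g (ContinuousMap.toLp 2 μ ℂ f),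
    ContinuousMap.coeFn_toLp (p := 2) (𝕜 := ℂ) μ f,
    ContinuousMap.coeFn_toLp (p := 2) (𝕜 := ℂ) μ (g * f)] with t h hf hgf
  exact h.trans (by rw [hf, hgf, ContinuousMap.mul_apply])

end MultiplicationOperators

open UnitAddTorus

-- Mathlib's Fourier theory on `UnitAddTorus` uses these instances, which are local to its file.
local instance : MeasureSpace UnitAddCircle := ⟨AddCircle.haarAddCircle⟩

local instance : Measure.IsAddHaarMeasure (volume : Measure UnitAddCircle) :=
  inferInstanceAs (Measure.IsAddHaarMeasure AddCircle.haarAddCircle)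

local instance : IsProbabilityMeasure (volume : Measure UnitAddCircle) :=
  inferInstanceAs (IsProbabilityMeasure AddCircle.haarAddCircle)

local notation "ℓ²(" κ ")" => lp (fun _ : κ ↦ ℂ) 2

section Multiplier

variable {ι : Type*} [Fintype ι]

lemma clm_ext_inner_single {κ : Type*} [DecidableEq κ] {A B : ℓ²(κ) →L[ℂ] ℓ²(κ)}
    (h : ∀ x y, ⟪(lp.single 2 x 1 : ℓ²(κ)), A (lp.single 2 y 1)⟫ =
      ⟪(lp.single 2 x 1 : ℓ²(κ)), B (lp.single 2 y 1)⟫) : A = B := by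
  refine lp.ext_continuousLinearMap (by simp) fun y ↦ ?_
  ext x
  simpa [lp.inner_single_left] using h x y

/-- The Fourier multiplier on `ℓ²(ℤ^ι)` with continuous symbol on the torus, as a representation of
the C⋆-algebra of symbols. -/
def multiplier : C(UnitAddTorus ι, ℂ) →⋆ₐ[ℂ] (ℓ²(ι → ℤ) →L[ℂ] ℓ²(ι → ℤ)) :=
  (mFourierBasis (d := ι)).repr.conjStarAlgEquiv.toStarAlgHom.comp (mulL2 volume)

lemma multiplier_apply (g : C(UnitAddTorus ι, ℂ)) (ψ : ℓ²(ι → ℤ)) :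
    multiplier g ψ = mFourierBasis.repr (mulL2 volume g (mFourierBasis.repr.symm ψ)) := rfl

lemma norm_multiplier_le (g : C(UnitAddTorus ι, ℂ)) : ‖multiplier g‖ ≤ ‖g‖ :=
  NonUnitalStarAlgHom.norm_apply_le multiplier g

lemma continuous_multiplier : Continuous (multiplier (ι := ι)) :=
  AddMonoidHomClass.continuous_of_bound multiplier 1 fun g ↦ by simpa using norm_multiplier_le g

lemma inner_single_multiplier_single (g : C(UnitAddTorus ι, ℂ)) (x y : ι → ℤ) :
    ⟪(lp.single 2 x 1 : ℓ²(ι → ℤ)), multiplier g (lp.single 2 y 1)⟫ = mFourierCoeff g (x - y) := by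
  rw [lp.inner_single_left, multiplier_apply, HilbertBasis.repr_symm_single, coe_mFourierBasis,
    mFourierLp, mulL2_toLp, mFourierBasis_repr, mFourierCoeff_toLp]
  simp only [RCLike.inner_apply, map_one, mul_one, mFourierCoeff, ContinuousMap.mul_apply,
    smul_eq_mul]
  refine integral_congr_ae (.of_forall fun t ↦ ?_)
  dsimp only
  rw [show -(x - y) = -x + y by abel, mFourier_add]
  ring

end Multiplier

open Filter Topology

section Translation

variable {G E : Type*} [AddCommGroup G] [TopologicalSpace G] [IsTopologicalAddGroup G]
  [NormedAddCommGroup E]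

/-- The translate `t ↦ g (t + s)` of a continuous function `g`. -/
def translate (s : G) (g : C(G, E)) : C(G, E) := g.comp (ContinuousMap.addRight s)

@[simp]
lemma translate_apply (s : G) (g : C(G, E)) (t : G) : translate s g t = g (t + s) := rfl

@[simp]
lemma translate_zero (g : C(G, E)) : translate 0 g = g := by ext; simp

lemma continuous_translate (g : C(G, E)) : Continuous fun s ↦ translate s g :=
  ContinuousMap.continuous_of_continuous_uncurry _ <|
    show Continuous fun p : G × G ↦ g (p.2 + p.1) by fun_prop

variable [CompactSpace G] [NormedSpace ℝ E] [CompleteSpace E]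

lemma hasDerivAt_translate {γ : ℝ →+ G} (hγ : Continuous γ) {g g' : C(G, E)}
    (hg : ∀ t, HasDerivAt (fun ε ↦ g (t + γ ε)) (g' t) 0) :
    HasDerivAt (fun ε ↦ translate (γ ε) g) g' 0 := by
  have hcont : Continuous fun δ ↦ translate (γ δ) g' := (continuous_translate g').comp hγ
  have hderiv (t : G) (ε : ℝ) : HasDerivAt (fun δ ↦ g (t + γ δ)) (g' (t + γ ε)) ε := by
    have h := hg (t + γ ε)
    rw [← sub_self ε] at h
    convert h.comp_sub_const ε ε using 3
    rw [add_assoc, ← map_add, add_sub_cancel]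
  have hftc (ε : ℝ) : translate (γ ε) g = g + ∫ δ in (0 : ℝ)..ε, translate (γ δ) g' := by
    ext t
    have heval := (ContinuousMap.evalCLM ℝ t).intervalIntegral_comp_comm
      (hcont.intervalIntegrable (μ := volume) 0 ε)
    have hintegral := intervalIntegral.integral_eq_sub_of_hasDerivAt (fun δ _ ↦ hderiv t δ)
      (Continuous.intervalIntegrable (by fun_prop) 0 ε)
    simp only [ContinuousMap.evalCLM_apply, translate_apply, map_zero, add_zero] at heval hintegral
    rw [ContinuousMap.add_apply, ← heval, hintegral, translate_apply, add_sub_cancel]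
  have hprim := intervalIntegral.integral_hasDerivAt_right
    (hcont.intervalIntegrable (μ := volume) 0 0)
    hcont.stronglyMeasurable.stronglyMeasurableAtFilter hcont.continuousAt
  rw [map_zero, translate_zero] at hprim
  simpa only [hftc] using hprim.const_add g

end Translation

section Diagonal

variable {κ : Type*}

/-- The diagonal operator on `ℓ²(κ)` with a bounded sequence of entries. -/
def diagonal : lp (fun _ : κ ↦ ℂ) ∞ →L[ℂ] ℓ²(κ) →L[ℂ] ℓ²(κ) :=
  lp.holderL 2 (K := 1) (fun _ ↦ ContinuousLinearMap.mul ℂ ℂ)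
    fun _ ↦ ContinuousLinearMap.opNorm_mul_le ℂ ℂ

@[simp]
lemma diagonal_apply (w : lp (fun _ : κ ↦ ℂ) ∞) (ψ : ℓ²(κ)) (x : κ) :
    diagonal w ψ x = w x * ψ x := rfl

open scoped Classical in
lemma norm_diagonal_apply_le_sum_add {w : lp (fun _ : κ ↦ ℂ) ∞} {F : Finset κ} {ε : ℝ}
    (hε : 0 ≤ ε) (hw : ∀ x ∉ F, ‖w x‖ ≤ ε) (ψ : ℓ²(κ)) :
    ‖diagonal w ψ‖ ≤ ∑ x ∈ F, ‖w x‖ * ‖ψ x‖ + ε * ‖ψ‖ := by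
  set head : ℓ²(κ) := ∑ x ∈ F, lp.single 2 x (w x * ψ x)
  have htail : ‖diagonal w ψ - head‖ ≤ ‖(ε : ℂ) • ψ‖ := by
    refine lp.norm_mono two_ne_zero fun x ↦ ?_
    have hhead : head x = if x ∈ F then w x * ψ x else 0 := by
      simp only [head, lp.coeFn_sum, Finset.sum_apply, lp.coeFn_single, Finset.sum_pi_single]
    rw [lp.coeFn_sub, Pi.sub_apply, hhead, diagonal_apply, lp.coeFn_smul, Pi.smul_apply, norm_smul,
      norm_real, Real.norm_of_nonneg hε]
    split_ifs with hx
    · rw [sub_self, norm_zero]; positivity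
    · rw [sub_zero, norm_mul]; gcongr; exact hw x hx
  have hhead : ‖head‖ ≤ ∑ x ∈ F, ‖w x‖ * ‖ψ x‖ :=
    norm_sum_le_of_le F fun x _ ↦ by rw [lp.norm_single two_pos, norm_mul]
  rw [norm_smul, norm_real, Real.norm_of_nonneg hε] at htail
  linarith [norm_le_norm_add_norm_sub head (diagonal w ψ), norm_sub_rev head (diagonal w ψ)]

lemma tendsto_diagonal_apply_zero {w : lp (fun _ : κ ↦ ℂ) ∞} (hw : Tendsto w cofinite (𝓝 0))
    {ψ : ℕ → ℓ²(κ)} {C : ℝ} (hC : ∀ n, ‖ψ n‖ ≤ C)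
    (hψ : ∀ x, Tendsto (fun n ↦ ψ n x) atTop (𝓝 0)) :
    Tendsto (fun n ↦ diagonal w (ψ n)) atTop (𝓝 0) := by
  have hC₀ : 0 ≤ C := (norm_nonneg _).trans (hC 0)
  refine Metric.tendsto_nhds.2 fun ε hε ↦ ?_
  set η : ℝ := ε / (C + 2)
  have hη : 0 < η := by positivity
  have hF : {x | ¬ ‖w x‖ < η}.Finite := by
    simpa only [dist_zero_right, eventually_cofinite] using Metric.tendsto_nhds.1 hw η hη
  have hsum : Tendsto (fun n ↦ ∑ x ∈ hF.toFinset, ‖w x‖ * ‖ψ n x‖) atTop (𝓝 0) := by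
    simpa only [norm_zero, mul_zero, Finset.sum_const_zero] using
      tendsto_finsetSum hF.toFinset fun x _ ↦ (hψ x).norm.const_mul ‖w x‖
  filter_upwards [hsum.eventually_lt_const hη] with n hn
  have hbound := norm_diagonal_apply_le_sum_add hη.le (F := hF.toFinset)
    (fun x hx ↦ by simpa using (by simpa using hx : ‖w x‖ < η).le) (ψ n)
  have hη_eq : η * (C + 2) = ε := div_mul_cancel₀ ε (by positivity)
  rw [dist_zero_right]
  nlinarith [mul_le_mul_of_nonneg_left (hC n) hη.le]

end Diagonal

section Phase

variable {ι : Type*} [Fintype ι]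

/-- The characters `x ↦ e^{2πi⟨x, s⟩}` of the lattice `ℤ^ι`, as bounded sequences; the corresponding
diagonal operators are unitarily equivalent to the translations of the torus. -/
def phase (s : UnitAddTorus ι) : lp (fun _ : ι → ℤ ↦ ℂ) ∞ :=
  ⟨fun x ↦ mFourier x s, memℓp_infty ⟨1, by
    rintro _ ⟨x, rfl⟩
    exact (ContinuousMap.norm_coe_le_norm _ s).trans_eq mFourier_norm⟩⟩

@[simp]
lemma phase_apply (s : UnitAddTorus ι) (x : ι → ℤ) : phase s x = mFourier x s := rfl

lemma mFourier_apply_add (m : ι → ℤ) (t s : UnitAddTorus ι) :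
    mFourier m (t + s) = mFourier m t * mFourier m s := by
  simp [mFourier, fourier_apply, smul_add, AddCircle.toCircle_add, Finset.prod_mul_distrib]

lemma translate_mFourier (s : UnitAddTorus ι) (m : ι → ℤ) :
    translate s (mFourier m) = mFourier m s • mFourier m := by
  ext t
  rw [translate_apply, mFourier_apply_add, mul_comm]
  rfl

lemma norm_mFourier_apply (m : ι → ℤ) (t : UnitAddTorus ι) : ‖mFourier m t‖ = 1 := by
  simp [mFourier, fourier_apply, Circle.norm_coe, -smul_eq_mul]

lemma star_mFourier_apply (m : ι → ℤ) (t : UnitAddTorus ι) :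
    star (mFourier m t) = mFourier m (-t) := by
  simp [mFourier, fourier_apply]

lemma mFourierCoeff_translate (s : UnitAddTorus ι) (g : C(UnitAddTorus ι, ℂ)) (m : ι → ℤ) :
    mFourierCoeff (translate s g) m = mFourier m s * mFourierCoeff g m := by
  have hshift (t : UnitAddTorus ι) :
      mFourier (-m) t * g (t + s) = mFourier m s * (mFourier (-m) (t + s) * g (t + s)) := by
    have hunit : mFourier m s * mFourier (-m) s = 1 := by
      rw [← mFourier_add, add_neg_cancel, mFourier_zero, ContinuousMap.one_apply]
    linear_combination (-mFourier (-m) t * g (t + s)) * hunit +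
      mFourier m s * g (t + s) * -mFourier_apply_add (-m) t s
  simp only [mFourierCoeff, smul_eq_mul, translate_apply, hshift]
  rw [integral_const_mul, integral_add_right_eq_self fun t ↦ mFourier (-m) t * g t]

lemma inner_diagonal_phase_neg_left (s : UnitAddTorus ι) (φ ψ : ℓ²(ι → ℤ)) :
    ⟪diagonal (phase (-s)) φ, ψ⟫ = ⟪φ, diagonal (phase s) ψ⟫ := by
  simp only [lp.inner_eq_tsum, RCLike.inner_apply, diagonal_apply, phase_apply, map_mul,
    ← star_mFourier_apply, RCLike.star_def, RCLike.conj_conj]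
  exact tsum_congr fun x ↦ by ring

lemma tendsto_diagonal_phase_apply (ψ : ℓ²(ι → ℤ)) :
    Tendsto (fun s ↦ diagonal (phase s) ψ) (𝓝 0) (𝓝 ψ) := by
  have hsq (s : UnitAddTorus ι) :
      ‖diagonal (phase s) ψ - ψ‖ ^ 2 = ∑' x, ‖(mFourier x s - 1) * ψ x‖ ^ 2 := by
    simpa [sub_mul] using lp.norm_rpow_eq_tsum (by simp) (diagonal (phase s) ψ - ψ)
  have hsummable : Summable fun x ↦ (2 * ‖ψ x‖) ^ 2 := by
    simpa [mul_pow] using ((lp.memℓp ψ).summable (by simp)).mul_left (2 ^ 2)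
  have hcont : Continuous fun s : UnitAddTorus ι ↦ ∑' x, ‖(mFourier x s - 1) * ψ x‖ ^ 2 := by
    refine continuous_tsum (fun x ↦ by fun_prop) hsummable fun x s ↦ ?_
    rw [Real.norm_of_nonneg (by positivity), norm_mul]
    gcongr
    linarith [norm_sub_le (mFourier x s) 1, norm_mFourier_apply x s, norm_one (α := ℂ)]
  have hzero : ∑' x, ‖(mFourier x (0 : UnitAddTorus ι) - 1) * ψ x‖ ^ 2 = 0 := by
    simp [mFourier]
  rw [tendsto_iff_norm_sub_tendsto_zero]
  have h := (hcont.tendsto 0).sqrt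
  simp_rw [hzero, ← hsq, Real.sqrt_sq (norm_nonneg _)] at h
  simpa using h

lemma diagonal_phase_mul_multiplier (s : UnitAddTorus ι) (g : C(UnitAddTorus ι, ℂ)) :
    diagonal (phase s) * multiplier g = multiplier (translate s g) * diagonal (phase s) := by
  have hsingle (y : ι → ℤ) : diagonal (phase s) (lp.single 2 y 1) =
      mFourier y s • (lp.single 2 y 1 : ℓ²(ι → ℤ)) := by
    ext x
    obtain rfl | hxy := eq_or_ne x y <;> simp [*]
  refine clm_ext_inner_single fun x y ↦ ?_
  simp only [mul_apply_eq_comp]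
  have hphase : mFourier x s = mFourier (x - y) s * mFourier y s := by
    rw [← mFourier_add, sub_add_cancel]
  rw [hsingle, map_smul, inner_smul_right, inner_single_multiplier_single, mFourierCoeff_translate,
    ← inner_single_multiplier_single, lp.inner_single_left, lp.inner_single_left, diagonal_apply,
    phase_apply, RCLike.inner_apply, RCLike.inner_apply, hphase]
  ring

lemma diagonal_phase_multiplier_mFourier (s : UnitAddTorus ι) (m : ι → ℤ) (φ : ℓ²(ι → ℤ)) :
    diagonal (phase s) (multiplier (mFourier m) φ) =
      mFourier m s • multiplier (mFourier m) (diagonal (phase s) φ) := by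
  have h := DFunLike.congr_fun (diagonal_phase_mul_multiplier s (mFourier m)) φ
  rwa [translate_mFourier, map_smul] at h

end Phase

section CoordFlow

variable {ι : Type*} [DecidableEq ι]

/-- The one-parameter group of translations of the torus along the `k`-th coordinate. -/
def coordFlow (k : ι) : ℝ →+ UnitAddTorus ι :=
  (AddMonoidHom.single (fun _ : ι ↦ UnitAddCircle) k).comp (QuotientAddGroup.mk' _)

lemma coordFlow_apply (k : ι) (ε : ℝ) : coordFlow k ε = Pi.single k (ε : UnitAddCircle) := rfl

lemma continuous_coordFlow (k : ι) : Continuous (coordFlow k) :=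
  (continuous_single k).comp (AddCircle.continuous_mk' 1)

variable [Fintype ι]

lemma norm_mFourier_coordFlow_sub_one_le (m : ι → ℤ) (k : ι) (ε : ℝ) :
    ‖mFourier m (coordFlow k ε) - 1‖ ≤ 2 * π * |(m k : ℝ)| * |ε| := by
  have hexp : mFourier m (coordFlow k ε) =
      Complex.exp (Complex.I * ((2 * π * m k * ε : ℝ) : ℂ)) := by
    rw [coordFlow_apply, mFourier, ContinuousMap.coe_mk, Finset.prod_eq_single k,
      Pi.single_eq_same, fourier_coe_apply]
    · congr 1; push_cast; ring
    · intro i _ hi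
      simp [Pi.single_eq_of_ne hi]
    · simp
  rw [hexp]
  refine Real.norm_exp_I_mul_ofReal_sub_one_le.trans_eq ?_
  rw [Real.norm_eq_abs, abs_mul, abs_mul, abs_of_pos Real.two_pi_pos]

lemma norm_diagonal_phase_coordFlow_sub_le (k : ι) (ε : ℝ) {φ χ : ℓ²(ι → ℤ)}
    (h : ∀ x, |(x k : ℝ)| * ‖φ x‖ ≤ ‖χ x‖) :
    ‖diagonal (phase (coordFlow k ε)) φ - φ‖ ≤ 2 * π * |ε| * ‖χ‖ := by
  have hmono : ‖diagonal (phase (coordFlow k ε)) φ - φ‖ ≤ ‖((2 * π * |ε| : ℝ) : ℂ) • χ‖ := by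
    refine lp.norm_mono two_ne_zero fun x ↦ ?_
    calc ‖mFourier x (coordFlow k ε) * φ x - φ x‖
        = ‖mFourier x (coordFlow k ε) - 1‖ * ‖φ x‖ := by rw [← norm_mul, sub_one_mul]
      _ ≤ 2 * π * |(x k : ℝ)| * |ε| * ‖φ x‖ := by
        gcongr; exact norm_mFourier_coordFlow_sub_one_le x k ε
      _ = 2 * π * |ε| * (|(x k : ℝ)| * ‖φ x‖) := by ring
      _ ≤ 2 * π * |ε| * ‖χ x‖ := by gcongr; exact h x
      _ = ‖((2 * π * |ε| : ℝ) : ℂ) • χ x‖ := by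
        rw [norm_smul, norm_real, Real.norm_of_nonneg (by positivity)]
  rwa [norm_smul, norm_real, Real.norm_of_nonneg (by positivity)] at hmono

end CoordFlow

section Virial

lemma inner_commutator_apply_eq {𝕜 H : Type*} [RCLike 𝕜] [NormedAddCommGroup H]
    [InnerProductSpace 𝕜 H] {T B : H →L[𝕜] H} (hT : (T : H →ₗ[𝕜] H).IsSymmetric)
    (hTB : Commute T B) (D : H →L[𝕜] H) {ψ φ : H} {μ : ℝ} (hψ : T ψ + φ = (μ : 𝕜) • ψ) :
    inner 𝕜 ψ ((T * D - D * T) (B ψ)) = inner 𝕜 ψ (D (B φ)) - inner 𝕜 φ (D (B ψ)) := by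
  have hTψ : T ψ = (μ : 𝕜) • ψ - φ := eq_sub_of_add_eq hψ
  have hTB' : T (B ψ) = B (T ψ) := DFunLike.congr_fun hTB.eq ψ
  have hsymm : inner 𝕜 ψ (T (D (B ψ))) = inner 𝕜 (T ψ) (D (B ψ)) := (hT ψ (D (B ψ))).symm
  simp only [sub_apply, mul_apply_eq_comp, inner_sub_right, hsymm, hTB', hTψ,
    map_sub, map_smul, inner_sub_left, inner_smul_left, inner_smul_right, RCLike.conj_ofReal]
  ring

variable {ι : Type*} [Fintype ι]

lemma isSymmetric_multiplier {g : C(UnitAddTorus ι, ℂ)} (hg : IsSelfAdjoint g) :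
    (multiplier g : ℓ²(ι → ℤ) →ₗ[ℂ] ℓ²(ι → ℤ)).IsSymmetric :=
  (hg.map multiplier).isSymmetric

lemma norm_diagonal_phase_apply_le (s : UnitAddTorus ι) (φ : ℓ²(ι → ℤ)) :
    ‖diagonal (phase s) φ‖ ≤ ‖φ‖ :=
  lp.norm_mono two_ne_zero fun x ↦ by
    rw [diagonal_apply, phase_apply, norm_mul, norm_mFourier_apply, one_mul]

lemma norm_inner_multiplier_sub_translate_le {E : C(UnitAddTorus ι, ℂ)} (hE : IsSelfAdjoint E)
    {ψ φ : ℓ²(ι → ℤ)} {μ : ℝ} (hψ : multiplier E ψ + φ = (μ : ℂ) • ψ) (s : UnitAddTorus ι)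
    (m : ι → ℤ) :
    ‖⟪ψ, multiplier (E - translate s E) (diagonal (phase s) (multiplier (mFourier m) ψ))⟫‖ ≤
      ‖ψ‖ * (‖mFourier m s - 1‖ * ‖φ‖ + ‖diagonal (phase s) φ - φ‖ +
        ‖diagonal (phase (-s)) φ - φ‖) := by
  set S := diagonal (phase s)
  set B := multiplier (mFourier m)
  have hB (χ : ℓ²(ι → ℤ)) : ‖B χ‖ ≤ ‖χ‖ := by
    simpa [mFourier_norm] using B.le_of_opNorm_le (norm_multiplier_le (mFourier m)) χ
  have hcomm : multiplier (E - translate s E) * S =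
      multiplier E * (S - 1) - (S - 1) * multiplier E := by
    rw [map_sub, sub_mul, ← diagonal_phase_mul_multiplier]
    noncomm_ring
  have hSB : (S - 1) (B φ) = B ((mFourier m s - 1) • S φ + (S φ - φ)) := by
    have hphase : S (B φ) = mFourier m s • B (S φ) := diagonal_phase_multiplier_mFourier s m φ
    simp only [sub_apply, one_apply_eq_self, map_add, map_sub, map_smul, hphase]
    module
  have hadj : ⟪φ, (S - 1) (B ψ)⟫ = ⟪diagonal (phase (-s)) φ - φ, B ψ⟫ := by
    rw [sub_apply, inner_sub_right, inner_sub_left,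
      inner_diagonal_phase_neg_left, one_apply_eq_self]
  have hkey := inner_commutator_apply_eq (isSymmetric_multiplier hE)
    ((Commute.all E (mFourier m)).map multiplier) (S - 1) hψ
  rw [← hcomm, mul_apply_eq_comp, hSB, hadj] at hkey
  rw [hkey]
  calc _ ≤ ‖ψ‖ * ‖(mFourier m s - 1) • S φ + (S φ - φ)‖ +
        ‖diagonal (phase (-s)) φ - φ‖ * ‖ψ‖ :=
        (norm_sub_le _ _).trans <| add_le_add
          ((norm_inner_le_norm _ _).trans <| by gcongr; exact hB _)
          ((norm_inner_le_norm _ _).trans <| by gcongr; exact hB _)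
    _ ≤ ‖ψ‖ * (‖mFourier m s - 1‖ * ‖φ‖ + ‖S φ - φ‖) +
        ‖diagonal (phase (-s)) φ - φ‖ * ‖ψ‖ := by
        gcongr
        refine (norm_add_le _ _).trans ?_
        rw [norm_smul]
        gcongr
        exact norm_diagonal_phase_apply_le s φ
    _ = _ := by ring

variable [DecidableEq ι] {E : C(UnitAddTorus ι, ℂ)} {k : ι} {ψ φ χ : ℓ²(ι → ℤ)} {μ : ℝ}

lemma norm_inner_multiplier_slope_le (hE : IsSelfAdjoint E)
    (hψ : multiplier E ψ + φ = (μ : ℂ) • ψ)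
    (hφ : ∀ x, (1 + |(x k : ℝ)|) * ‖φ x‖ ≤ ‖χ x‖) (m : ι → ℤ) (ε : ℝ) :
    ‖⟪ψ, multiplier (ε⁻¹ • (translate (coordFlow k ε) E - E))
      (diagonal (phase (coordFlow k ε)) (multiplier (mFourier m) ψ))⟫‖ ≤
      2 * π * (|(m k : ℝ)| + 2) * ‖ψ‖ * ‖χ‖ := by
  have hφχ : ‖φ‖ ≤ ‖χ‖ := lp.norm_mono two_ne_zero fun x ↦
    (le_mul_of_one_le_left (norm_nonneg _) (by simp)).trans (hφ x)
  have hshift (δ : ℝ) : ‖diagonal (phase (coordFlow k δ)) φ - φ‖ ≤ 2 * π * |δ| * ‖χ‖ :=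
    norm_diagonal_phase_coordFlow_sub_le k δ fun x ↦
      (mul_le_mul_of_nonneg_right (by simp) (norm_nonneg _)).trans (hφ x)
  have hshift_neg := hshift (-ε)
  rw [map_neg, abs_neg] at hshift_neg
  have hslope : ε⁻¹ • (translate (coordFlow k ε) E - E) =
      (-((ε⁻¹ : ℝ) : ℂ)) • (E - translate (coordFlow k ε) E) := by
    ext t
    simp only [ContinuousMap.smul_apply, ContinuousMap.sub_apply, real_smul, smul_eq_mul]
    ring
  rw [hslope, map_smul, smul_apply, inner_smul_right, norm_mul, norm_neg, norm_real, norm_inv,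
    Real.norm_eq_abs]
  refine inv_mul_le_of_le_mul₀ (abs_nonneg ε) (by positivity) ?_
  calc _ ≤ _ := norm_inner_multiplier_sub_translate_le hE hψ _ m
    _ ≤ ‖ψ‖ * (2 * π * |(m k : ℝ)| * |ε| * ‖χ‖ + 2 * π * |ε| * ‖χ‖ + 2 * π * |ε| * ‖χ‖) := by
      gcongr
      exacts [norm_mFourier_coordFlow_sub_one_le m k ε, hshift ε]
    _ = _ := by ring

lemma norm_inner_multiplier_deriv_le {E' : C(UnitAddTorus ι, ℂ)} (hE : IsSelfAdjoint E)
    (hE' : ∀ t, HasDerivAt (fun ε ↦ E (t + coordFlow k ε)) (E' t) 0)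
    (hψ : multiplier E ψ + φ = (μ : ℂ) • ψ)
    (hφ : ∀ x, (1 + |(x k : ℝ)|) * ‖φ x‖ ≤ ‖χ x‖) (m : ι → ℤ) :
    ‖⟪ψ, multiplier (E' * mFourier m) ψ⟫‖ ≤ 2 * π * (|(m k : ℝ)| + 2) * ‖ψ‖ * ‖χ‖ := by
  set b := multiplier (mFourier m) ψ with hb
  have hslope : Tendsto (fun ε : ℝ ↦ ε⁻¹ • (translate (coordFlow k ε) E - E)) (𝓝[≠] 0) (𝓝 E') := by
    simpa only [zero_add, map_zero, translate_zero] using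
      (hasDerivAt_translate (continuous_coordFlow k) hE').tendsto_slope_zero
  have hmultiplier : Tendsto (fun ε : ℝ ↦ multiplier (ε⁻¹ • (translate (coordFlow k ε) E - E)))
      (𝓝[≠] 0) (𝓝 (multiplier E')) :=
    (continuous_multiplier.tendsto E').comp hslope
  have hphase : Tendsto (fun ε : ℝ ↦ diagonal (phase (coordFlow k ε)) b) (𝓝[≠] 0) (𝓝 b) :=
    ((tendsto_diagonal_phase_apply b).comp
      ((continuous_coordFlow k).tendsto' 0 0 (map_zero _))).mono_left nhdsWithin_le_nhds
  have happly := (isBoundedBilinearMap_apply (𝕜 := ℂ)).continuous.continuousAt.tendsto.comp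
    (hmultiplier.prodMk_nhds hphase)
  rw [map_mul, mul_apply_eq_comp, ← hb]
  exact le_of_tendsto (tendsto_const_nhds.inner (𝕜 := ℂ) happly).norm
    (.of_forall fun ε ↦ norm_inner_multiplier_slope_le hE hψ hφ m ε)

end Virial

section DefectIdeal

lemma exists_forall_mem_eq_zero_of_ne_top {X 𝕜 : Type*} [RCLike 𝕜] [TopologicalSpace X]
    [CompactSpace X] [T2Space X] {I : Ideal C(X, 𝕜)} (hI : I ≠ ⊤) : ∃ x, ∀ f ∈ I, f x = 0 := by
  obtain ⟨J, hJ, hIJ⟩ := I.exists_le_maximal hI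
  obtain ⟨x, hx⟩ := ContinuousMap.setOfIdeal_eq_compl_singleton J
  have hxJ : x ∉ ContinuousMap.setOfIdeal J := by simp [hx]
  exact ⟨x, fun f hf ↦ ContinuousMap.notMem_setOfIdeal.1 hxJ (hIJ hf)⟩

variable {ι : Type*} [Fintype ι] {ψ : ℕ → ℓ²(ι → ℤ)} {g : C(UnitAddTorus ι, ℂ)} {C : ℝ}

/-- The symbols that annihilate, in the limit, the quadratic forms `g ↦ ⟪ψ n, multiplier g (ψ n)⟫`.
When these forms converge to a measure on the torus, as they do along a subsequence, this is the
ideal of functions vanishing on its support. -/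
def defectIdeal (ψ : ℕ → ℓ²(ι → ℤ)) : Ideal C(UnitAddTorus ι, ℂ) where
  carrier := {g | ∀ b, Tendsto (fun n ↦ ⟪ψ n, multiplier (g * b) (ψ n)⟫) atTop (𝓝 0)}
  zero_mem' b := by simp
  add_mem' {g₁ g₂} h₁ h₂ b := by
    simpa only [add_mul, map_add, add_apply, inner_add_right, add_zero] using (h₁ b).add (h₂ b)
  smul_mem' c g hg b := by
    simpa only [smul_eq_mul, mul_comm c, mul_assoc] using hg (c * b)

lemma mem_defectIdeal : g ∈ defectIdeal ψ ↔
    ∀ b, Tendsto (fun n ↦ ⟪ψ n, multiplier (g * b) (ψ n)⟫) atTop (𝓝 0) := Iff.rfl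

lemma defectIdeal_ne_top (hψ : ∀ n, ‖ψ n‖ = 1) : defectIdeal ψ ≠ ⊤ := by
  rw [Ideal.ne_top_iff_one]
  intro h
  have h1 := mem_defectIdeal.1 h 1
  simp [inner_self_eq_norm_sq_to_K, hψ] at h1

lemma mem_defectIdeal_of_tendsto_multiplier (hC : ∀ n, ‖ψ n‖ ≤ C)
    (hg : Tendsto (fun n ↦ multiplier g (ψ n)) atTop (𝓝 0)) : g ∈ defectIdeal ψ := by
  refine mem_defectIdeal.2 fun b ↦ squeeze_zero_norm (fun n ↦ ?_)
    (by simpa using hg.norm.const_mul (C * ‖b‖))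
  rw [mul_comm g b, map_mul, mul_apply_eq_comp, mul_assoc]
  refine (norm_inner_le_norm _ _).trans ?_
  gcongr
  · exact (norm_nonneg _).trans (hC n)
  · exact hC n
  · exact (multiplier b).le_of_opNorm_le (norm_multiplier_le b) _

lemma mem_defectIdeal_of_mFourier (hC : ∀ n, ‖ψ n‖ ≤ C)
    (hg : ∀ m, Tendsto (fun n ↦ ⟪ψ n, multiplier (g * mFourier m) (ψ n)⟫) atTop (𝓝 0)) :
    g ∈ defectIdeal ψ := by
  set F : ℕ → C(UnitAddTorus ι, ℂ) → ℂ := fun n b ↦ ⟪ψ n, multiplier (g * b) (ψ n)⟫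
  have hF : Equicontinuous F := by
    refine Metric.equicontinuous_of_continuity_modulus (fun r ↦ C * (‖g‖ * r * C))
      (Continuous.tendsto' (by fun_prop) 0 0 (by simp)) F fun b b' n ↦ ?_
    rw [dist_eq_norm, dist_eq_norm, ← inner_sub_right, ← sub_apply, ← map_sub, ← mul_sub]
    refine (norm_inner_le_norm _ _).trans ?_
    gcongr
    · exact (norm_nonneg _).trans (hC n)
    · exact hC n
    · exact (multiplier _).le_of_opNorm_le_of_le
        ((norm_multiplier_le _).trans (norm_mul_le _ _)) (hC n)
  have hspan : (Submodule.span ℂ (Set.range (mFourier (d := ι))) : Set C(UnitAddTorus ι, ℂ)) ⊆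
      {b | Tendsto (F · b) atTop (𝓝 0)} := by
    intro b hb
    induction hb using Submodule.span_induction with
    | mem b hb => obtain ⟨m, rfl⟩ := hb; exact hg m
    | zero => simp [F]
    | add b b' _ _ h h' =>
      simpa only [F, Set.mem_ofPred_eq, mul_add, map_add, add_apply, inner_add_right, add_zero]
        using h.add h'
    | smul c b _ h =>
      simpa only [F, Set.mem_ofPred_eq, mul_smul_comm, map_smul, smul_apply, inner_smul_right,
        mul_zero] using h.const_mul c
  have hclosed := hF.isClosed_setOfPred_tendsto (l := atTop) (f := fun _ ↦ 0) continuous_const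
  have hdense := Submodule.dense_iff_topologicalClosure_eq_top.2
    (span_mFourier_closure_eq_top (d := ι))
  exact fun b ↦ closure_minimal hspan hclosed (hdense b)

variable {E : C(UnitAddTorus ι, ℂ)} {φ χ : ℕ → ℓ²(ι → ℤ)} {μ : ℕ → ℝ} {μ₀ : ℝ}

lemma sub_algebraMap_mem_defectIdeal (hC : ∀ n, ‖ψ n‖ ≤ C)
    (hψ : ∀ n, multiplier E (ψ n) + φ n = (μ n : ℂ) • ψ n) (hμ : Tendsto μ atTop (𝓝 μ₀))
    (hφ : Tendsto φ atTop (𝓝 0)) : E - algebraMap ℂ _ (μ₀ : ℂ) ∈ defectIdeal ψ := by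
  have happly (n : ℕ) : multiplier (E - algebraMap ℂ _ (μ₀ : ℂ)) (ψ n) =
      ((μ n - μ₀ : ℝ) : ℂ) • ψ n - φ n := by
    rw [map_sub, AlgHomClass.commutes, sub_apply, eq_sub_of_add_eq (hψ n),
      Algebra.algebraMap_eq_smul_one, smul_apply, one_apply_eq_self, ofReal_sub]
    module
  have hmain : Tendsto (fun n ↦ ((μ n - μ₀ : ℝ) : ℂ) • ψ n) atTop (𝓝 0) := by
    refine squeeze_zero_norm (a := fun n ↦ |μ n - μ₀| * C) (fun n ↦ ?_) ?_
    · rw [norm_smul, norm_real, Real.norm_eq_abs]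
      gcongr
      exact hC n
    · simpa using (hμ.sub_const μ₀).abs.mul_const C
  refine mem_defectIdeal_of_tendsto_multiplier hC ?_
  simpa only [happly, sub_zero] using hmain.sub hφ

lemma deriv_mem_defectIdeal [DecidableEq ι] {E' : C(UnitAddTorus ι, ℂ)} (hE : IsSelfAdjoint E)
    {k : ι} (hE' : ∀ t, HasDerivAt (fun ε ↦ E (t + coordFlow k ε)) (E' t) 0)
    (hC : ∀ n, ‖ψ n‖ ≤ C) (hψ : ∀ n, multiplier E (ψ n) + φ n = (μ n : ℂ) • ψ n)
    (hφ : ∀ n x, (1 + |(x k : ℝ)|) * ‖φ n x‖ ≤ ‖χ n x‖) (hχ : Tendsto χ atTop (𝓝 0)) :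
    E' ∈ defectIdeal ψ := by
  refine mem_defectIdeal_of_mFourier hC fun m ↦ squeeze_zero_norm
    (a := fun n ↦ 2 * π * (|(m k : ℝ)| + 2) * C * ‖χ n‖) (fun n ↦ ?_)
    (by simpa using hχ.norm.const_mul (2 * π * (|(m k : ℝ)| + 2) * C))
  refine (norm_inner_multiplier_deriv_le hE hE' (hψ n) (hφ n) m).trans ?_
  gcongr
  exact hC n

end DefectIdeal

section Orthonormal

lemma tendsto_inner_zero_of_orthonormal {𝕜 H : Type*} [RCLike 𝕜] [NormedAddCommGroup H]
    [InnerProductSpace 𝕜 H] {ψ : ℕ → H} (hψ : Orthonormal 𝕜 ψ) (φ : H) :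
    Tendsto (fun n ↦ inner 𝕜 φ (ψ n)) atTop (𝓝 0) := by
  have h := (hψ.inner_products_summable φ).tendsto_atTop_zero.sqrt
  simp_rw [Real.sqrt_sq (norm_nonneg _), norm_inner_symm, Real.sqrt_zero] at h
  exact tendsto_zero_iff_norm_tendsto_zero.2 h

variable {ι : Type*} [Fintype ι] [DecidableEq ι]

theorem exists_critical_point_of_orthonormal {E : C(UnitAddTorus ι, ℂ)}
    {E' : ι → C(UnitAddTorus ι, ℂ)} (hE : IsSelfAdjoint E)
    (hE' : ∀ k t, HasDerivAt (fun ε ↦ E (t + coordFlow k ε)) (E' k t) 0)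
    {v : (ι → ℤ) → ℂ} (hv : Tendsto (fun x ↦ ((1 + ‖x‖ : ℝ) : ℂ) * v x) cofinite (𝓝 0))
    {ψ φ : ℕ → ℓ²(ι → ℤ)} {μ : ℕ → ℝ} {μ₀ : ℝ} (hψ : Orthonormal ℂ ψ)
    (hφ : ∀ n x, φ n x = v x * ψ n x)
    (heigen : ∀ n, multiplier E (ψ n) + φ n = (μ n : ℂ) • ψ n)
    (hμ : Tendsto μ atTop (𝓝 μ₀)) : ∃ t, E t = μ₀ ∧ ∀ k, E' k t = 0 := by
  set w : lp (fun _ : ι → ℤ ↦ ℂ) ∞ :=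
    ⟨fun x ↦ ((1 + ‖x‖ : ℝ) : ℂ) * v x, memℓp_infty hv.norm.bddAbove_range_of_cofinite⟩
  have hweight (n : ℕ) (x : ι → ℤ) : ‖diagonal w (ψ n) x‖ = (1 + ‖x‖) * ‖φ n x‖ := by
    rw [diagonal_apply, hφ, norm_mul, norm_mul, norm_mul, norm_real,
      Real.norm_of_nonneg (by positivity), mul_assoc]
  have hC (n : ℕ) : ‖ψ n‖ ≤ 1 := (hψ.1 n).le
  have hdecay : Tendsto (fun n ↦ diagonal w (ψ n)) atTop (𝓝 0) :=
    tendsto_diagonal_apply_zero hv hC fun x ↦ by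
      simpa [lp.inner_single_left] using tendsto_inner_zero_of_orthonormal hψ (lp.single 2 x 1)
  have hφ_zero : Tendsto φ atTop (𝓝 0) := by
    refine squeeze_zero_norm (fun n ↦ lp.norm_mono two_ne_zero fun x ↦ ?_)
      (tendsto_zero_iff_norm_tendsto_zero.1 hdecay)
    rw [hweight]
    exact le_mul_of_one_le_left (norm_nonneg _) (by simp)
  obtain ⟨t, ht⟩ := exists_forall_mem_eq_zero_of_ne_top (defectIdeal_ne_top hψ.1)
  refine ⟨t, ?_, fun k ↦ ht _ (deriv_mem_defectIdeal hE (hE' k) hC heigen (fun n x ↦ ?_) hdecay)⟩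
  · exact sub_eq_zero.1 (ht _ (sub_algebraMap_mem_defectIdeal hC heigen hμ hφ_zero))
  · rw [hweight, ← Int.norm_eq_abs]
    gcongr
    exact norm_le_pi_norm x k

end Orthonormal

section TorusLift

variable {d : ℕ}

lemma neg_two_pi_ne_zero : -(2 * π) ≠ 0 := neg_ne_zero.2 Real.two_pi_pos.ne'

/-- The projection of the momentum space onto the torus, `t = -p / 2π`. With this sign the
coefficients `fCoeff` become the standard Fourier coefficients on the torus. -/
def torusMk : C(Fin d → ℝ, UnitAddTorus (Fin d)) where
  toFun p i := ((-(2 * π))⁻¹ * p i : ℝ)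
  continuous_toFun := by fun_prop

lemma torusMk_smul (s : Fin d → ℝ) : torusMk (-(2 * π) • s) = fun i ↦ (s i : UnitAddCircle) := by
  ext i
  simp only [torusMk, ContinuousMap.coe_mk, Pi.smul_apply, smul_eq_mul,
    inv_mul_cancel_left₀ neg_two_pi_ne_zero]

lemma isQuotientMap_torusMk : IsQuotientMap (torusMk (d := d)) := by
  have hmk : IsOpenQuotientMap (Pi.map fun (_ : Fin d) (s : ℝ) ↦ (s : UnitAddCircle)) :=
    .piMap fun _ ↦ QuotientAddGroup.isOpenQuotientMap_mk
  exact hmk.isQuotientMap.comp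
    (Homeomorph.smulOfNeZero (α := Fin d → ℝ) _ (inv_ne_zero neg_two_pi_ne_zero)).isQuotientMap

lemma torusMk_add_coordFlow (k : Fin d) (p : Fin d → ℝ) (ε : ℝ) :
    torusMk p + coordFlow k ε = torusMk (p + Pi.single k (-(2 * π) * ε)) := by
  ext i
  simp only [torusMk, ContinuousMap.coe_mk, Pi.add_apply, coordFlow_apply, mul_add,
    AddCircle.coe_add]
  obtain rfl | hi := eq_or_ne i k
  · simp only [Pi.single_eq_same, inv_mul_cancel_left₀ neg_two_pi_ne_zero]
  · simp [hi]

lemma mFourier_neg_torusMk (m : Γd d) (p : Fin d → ℝ) :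
    mFourier (-m) (torusMk p) = Complex.exp (Complex.I * (dotZ p m : ℝ)) := by
  simp only [mFourier, torusMk, ContinuousMap.coe_mk, fourier_coe_apply, dotZ]
  rw [← Complex.exp_sum]
  push_cast
  rw [Finset.mul_sum]
  refine congrArg _ (Finset.sum_congr rfl fun i _ ↦ ?_)
  have hπ : (π : ℂ) ≠ 0 := ofReal_ne_zero.2 Real.pi_ne_zero
  simp only [Pi.neg_apply, Int.cast_neg]
  field_simp

open scoped Pointwise in
lemma neg_two_pi_smul_unitCube :
    -(2 * π) • (Set.univ.pi fun _ ↦ Set.Icc (-(1 / 2)) (1 / 2) : Set (Fin d → ℝ)) = torusBox d := by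
  rw [Set.smul_set_univ_pi, torusBox]
  refine congrArg _ (funext fun _ ↦ ?_)
  rw [Pi.smul_apply, Set.neg_smul_set, LinearOrderedField.smul_Icc Real.two_pi_pos, Set.neg_Icc]
  congr 1 <;> ring

lemma mFourierCoeff_eq_integral_torusBox (g : C(UnitAddTorus (Fin d), ℂ)) (m : Γd d) :
    mFourierCoeff g m = ((1 / (2 * π) ^ d : ℝ) : ℂ) *
      ∫ p in torusBox d, g (torusMk p) * Complex.exp (Complex.I * (dotZ p m : ℝ)) := by
  have hcube : {s : Fin d → ℝ | ∀ i, s i ∈ Set.Ioc (-(1 / 2) : ℝ) (-(1 / 2) + 1)} =ᵐ[volume]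
      Set.univ.pi fun _ ↦ Set.Icc (-(1 / 2)) (1 / 2) := by
    have hIoc : {s : Fin d → ℝ | ∀ i, s i ∈ Set.Ioc (-(1 / 2) : ℝ) (-(1 / 2) + 1)} =
        Set.univ.pi fun _ ↦ Set.Ioc (-(1 / 2)) (1 / 2) := by
      ext s
      norm_num [Set.mem_pi]
    rw [hIoc, volume_pi]
    exact Measure.pi_Ioc_ae_eq_pi_Icc
  have hscale := Measure.setIntegral_comp_smul (volume : Measure (Fin d → ℝ))
    (fun p ↦ g (torusMk p) * mFourier (-m) (torusMk p)) (R := -(2 * π))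
    (s := Set.univ.pi fun _ ↦ Set.Icc (-(1 / 2)) (1 / 2)) neg_two_pi_ne_zero
  have hfactor : |((-(2 * π)) ^ Module.finrank ℝ (Fin d → ℝ))⁻¹| = 1 / (2 * π) ^ d := by
    rw [Module.finrank_fin_fun, abs_inv, abs_pow, abs_neg, abs_of_pos Real.two_pi_pos, one_div]
  rw [neg_two_pi_smul_unitCube, hfactor, real_smul] at hscale
  rw [mFourierCoeff_eq_integral _ _ fun _ ↦ -(1 / 2), setIntegral_congr_set hcube]
  simp only [torusMk_smul] at hscale
  simp only [← mFourier_neg_torusMk, smul_eq_mul, ← hscale]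
  exact integral_congr_ae (.of_forall fun _ ↦ mul_comm _ _)

variable {f : (Fin d → ℝ) → ℝ}

lemma factorsThrough_torusMk (hf : Periodic2pi f) : Function.FactorsThrough f torusMk := by
  intro p q hpq
  have hdiff (i : Fin d) : ∃ n : ℤ, p i = q i + 2 * π * n := by
    obtain ⟨n, hn⟩ := AddCircle.coe_eq_zero_iff 1 |>.1 <|
      (AddCircle.coe_sub 1 _ _).trans (sub_eq_zero.2 (congrFun hpq i))
    refine ⟨-n, ?_⟩
    rw [zsmul_one] at hn
    push_cast
    rw [hn]
    field_simp
    ring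
  choose m hm using hdiff
  rw [← hf q m]
  exact congrArg f (funext hm)

/-- The function on the torus induced by a continuous periodic function. -/
def torusLift (hf : Periodic2pi f) (hc : Continuous f) : C(UnitAddTorus (Fin d), ℂ) :=
  isQuotientMap_torusMk.lift ⟨fun p ↦ (f p : ℂ), by fun_prop⟩
    fun _ _ h ↦ congrArg ofReal (factorsThrough_torusMk hf h)

@[simp]
lemma torusLift_torusMk (hf : Periodic2pi f) (hc : Continuous f) (p : Fin d → ℝ) :
    torusLift hf hc (torusMk p) = f p := by
  have hcomp : (torusLift hf hc).comp torusMk = ⟨fun p ↦ (f p : ℂ), by fun_prop⟩ :=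
    isQuotientMap_torusMk.lift_comp _ _
  exact DFunLike.congr_fun hcomp p

lemma isSelfAdjoint_torusLift (hf : Periodic2pi f) (hc : Continuous f) :
    IsSelfAdjoint (torusLift hf hc) := by
  ext t
  obtain ⟨p, rfl⟩ := isQuotientMap_torusMk.surjective t
  simp

lemma IsMultiplier.eq_multiplier_torusLift (hf : Periodic2pi f) (hc : Continuous f)
    {H : L2 d →L[ℂ] L2 d} (hH : IsMultiplier f H) : H = multiplier (torusLift hf hc) := by
  refine clm_ext_inner_single fun x y ↦ ?_
  rw [inner_single_multiplier_single, mFourierCoeff_eq_integral_torusBox]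
  simp only [torusLift_torusMk]
  exact hH x y

lemma Periodic2pi.pd (hf : Periodic2pi f) (k : Fin d) : Periodic2pi (pd f k) := by
  intro p m
  rw [LatSch.pd, LatSch.pd, ← fderiv_comp_add_right]
  simp only [hf _ m]

lemma continuous_pd (hf : ContDiff ℝ 1 f) (k : Fin d) : Continuous (pd f k) :=
  (hf.continuous_fderiv one_ne_zero).clm_apply continuous_const

lemma hasDerivAt_torusLift_coordFlow (hf : Periodic2pi f) (hf1 : ContDiff ℝ 1 f) (k : Fin d)
    (t : UnitAddTorus (Fin d)) :
    HasDerivAt (fun ε ↦ torusLift hf hf1.continuous (t + coordFlow k ε))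
      ((-(2 * π) : ℂ) • torusLift (hf.pd k) (continuous_pd hf1 k) t) 0 := by
  obtain ⟨p, rfl⟩ := isQuotientMap_torusMk.surjective t
  have hpath : HasDerivAt (fun ε : ℝ ↦ p + Pi.single k (-(2 * π) * ε))
      (Pi.single k (-(2 * π))) 0 := by
    refine HasDerivAt.const_add p (hasDerivAt_pi.2 fun i ↦ ?_)
    obtain rfl | hi := eq_or_ne i k
    · simpa using (hasDerivAt_id (0 : ℝ)).const_mul (-(2 * π))
    · simpa [hi] using hasDerivAt_const (0 : ℝ) (0 : ℝ)
  have hf' : HasFDerivAt f (fderiv ℝ f p) (p + Pi.single k (-(2 * π) * 0)) := by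
    simpa using (hf1.differentiable one_ne_zero p).hasFDerivAt
  have hslope : fderiv ℝ f p (Pi.single k (-(2 * π))) = -(2 * π) * pd f k p := by
    rw [pd, ← smul_eq_mul (a := -(2 * π)), ← map_smul, ← Pi.single_smul, smul_eq_mul, mul_one]
  simp only [torusMk_add_coordFlow, torusLift_torusMk]
  refine (hf'.comp_hasDerivAt 0 hpath).ofReal_comp.congr_deriv ?_
  rw [hslope, smul_eq_mul]
  push_cast
  rfl

end TorusLift

section Eigenvectors

open InnerProductSpace Module.End

variable {𝕜 H : Type*} [RCLike 𝕜] [NormedAddCommGroup H] [InnerProductSpace 𝕜 H]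
  {T : H →ₗ[𝕜] H}

lemma gramSchmidt_mem_eigenspace (hT : T.IsSymmetric) {v : ℕ → H} {μ : ℕ → 𝕜}
    (hv : ∀ n, v n ∈ eigenspace T (μ n)) (n : ℕ) : gramSchmidt 𝕜 v n ∈ eigenspace T (μ n) := by
  induction n using Nat.strong_induction_on with
  | _ n ih =>
    rw [gramSchmidt_def]
    refine sub_mem (hv n) (sum_mem fun i hi ↦ ?_)
    have hmem := ih i (Finset.mem_Iio.1 hi)
    rw [Submodule.starProjection_singleton]
    obtain h | h := eq_or_ne (μ i) (μ n)
    · exact Submodule.smul_mem _ _ (h ▸ hmem)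
    · rw [show inner 𝕜 (gramSchmidt 𝕜 v i) (v n) = 0 from
        hT.orthogonalFamily_eigenspaces h ⟨_, hmem⟩ ⟨_, hv n⟩, zero_div, zero_smul]
      exact zero_mem _

lemma exists_linearIndependent_nat_of_not_finiteDimensional {K E : Type*} [DivisionRing K]
    [AddCommGroup E] [Module K E] {s : Set E} (hs : ¬ FiniteDimensional K (Submodule.span K s)) :
    ∃ v : ℕ → E, LinearIndependent K v ∧ ∀ n, v n ∈ s := by
  obtain ⟨b, hbs, hspan, hb⟩ := exists_linearIndependent K s
  have hinf : b.Infinite := fun hfin ↦ hs (hspan ▸ FiniteDimensional.span_of_finite K hfin)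
  exact ⟨_, hb.comp _ (hinf.natEmbedding b).injective, fun n ↦ hbs (hinf.natEmbedding b n).2⟩

theorem exists_orthonormal_eigenvectors (hT : T.IsSymmetric) {s : Set H} {Δ : Set ℝ}
    (hs : ∀ v ∈ s, ∃ μ ∈ Δ, T v = (μ : 𝕜) • v)
    (hinf : ¬ FiniteDimensional 𝕜 (Submodule.span 𝕜 s)) :
    ∃ (ψ : ℕ → H) (μ : ℕ → ℝ), Orthonormal 𝕜 ψ ∧ (∀ n, μ n ∈ Δ) ∧
      ∀ n, T (ψ n) = (μ n : 𝕜) • ψ n := by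
  obtain ⟨v, hv, hvs⟩ := exists_linearIndependent_nat_of_not_finiteDimensional hinf
  choose μ hμ hvμ using fun n ↦ hs _ (hvs n)
  have heigen (n : ℕ) := gramSchmidt_mem_eigenspace hT (fun n ↦ mem_eigenspace_iff.2 (hvμ n)) n
  exact ⟨_, μ, gramSchmidtNormed_orthonormal hv, hμ, fun n ↦
    mem_eigenspace_iff.1 (Submodule.smul_mem _ _ (heigen n))⟩

end Eigenvectors

section Lattice

variable {d : ℕ}

lemma norm_le_lnorm (x : Γd d) : ‖x‖ ≤ lnorm x := by
  refine (pi_norm_le_iff_of_nonneg (Real.sqrt_nonneg _)).2 fun i ↦ ?_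
  rw [Int.norm_eq_abs]
  exact Real.abs_le_sqrt <|
    Finset.single_le_sum (f := fun i ↦ (x i : ℝ) ^ 2) (fun i _ ↦ sq_nonneg _) (Finset.mem_univ i)

lemma lnorm_nonneg (x : Γd d) : 0 ≤ lnorm x := Real.sqrt_nonneg _

lemma tendsto_one_add_lnorm_mul_of_Phi_lt_top {n : ℕ} (hn : n ≠ 0) {V : Γd d → ℝ}
    (hV : Phi 1 n V < ⊤) : Tendsto (fun x ↦ (1 + lnorm x) * V x) cofinite (𝓝 0) := by
  have hfin : ∑' x, ENNReal.ofReal (|V x| * (1 + lnorm x) ^ n) ≠ ⊤ := by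
    simpa only [Phi, Nat.cast_one, div_one, Real.rpow_one, pow_one] using hV.ne
  have hsum : Summable fun x ↦ |V x| * (1 + lnorm x) ^ n :=
    (ENNReal.summable_toReal hfin).congr fun x ↦ ENNReal.toReal_ofReal <|
      mul_nonneg (abs_nonneg _) (pow_nonneg (add_nonneg zero_le_one (lnorm_nonneg x)) n)
  refine squeeze_zero_norm (fun x ↦ ?_) hsum.tendsto_cofinite_zero
  have hone : 1 ≤ 1 + lnorm x := le_add_of_nonneg_right (lnorm_nonneg x)
  rw [norm_mul, Real.norm_of_nonneg (zero_le_one.trans hone), Real.norm_eq_abs, mul_comm]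
  gcongr
  exact le_self_pow₀ hone hn

lemma IsMulOp.isSymmetric {V : Γd d → ℝ} {M : L2 d →L[ℂ] L2 d} (hM : IsMulOp V M) :
    (M : L2 d →ₗ[ℂ] L2 d).IsSymmetric := by
  intro φ χ
  rw [lp.inner_eq_tsum, lp.inner_eq_tsum]
  refine tsum_congr fun x ↦ ?_
  simp only [ContinuousLinearMap.coe_coe, hM _ x, RCLike.inner_apply, map_mul, conj_ofReal]
  ring

variable {e : (Fin d → ℝ) → ℝ}

lemma mem_Thr_of_forall_pd_eq_zero {p : Fin d → ℝ} (hp : ∀ k, pd e k p = 0) : e p ∈ Thr e := by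
  refine ⟨p, ContinuousLinearMap.coe_injective (LinearMap.pi_ext' fun k ↦ ?_), rfl⟩
  ext
  simpa [pd] using hp k

theorem mem_Thr_of_tendsto_eigenvalues (he : Periodic2pi e) (heC1 : ContDiff ℝ 1 e)
    {V : Γd d → ℝ} (hV : Tendsto (fun x ↦ (1 + lnorm x) * V x) cofinite (𝓝 0))
    {Hop Mv : L2 d →L[ℂ] L2 d} (hHop : IsMultiplier e Hop) (hMv : IsMulOp V Mv)
    {ψ : ℕ → L2 d} {μ : ℕ → ℝ} {μ₀ : ℝ} (hψ : Orthonormal ℂ ψ)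
    (heigen : ∀ n, (Hop + Mv) (ψ n) = (μ n : ℂ) • ψ n) (hμ : Tendsto μ atTop (𝓝 μ₀)) :
    μ₀ ∈ Thr e := by
  have hdecay : Tendsto (fun x ↦ ((1 + ‖x‖ : ℝ) : ℂ) * (V x : ℂ)) cofinite (𝓝 0) := by
    refine squeeze_zero_norm (fun x ↦ ?_) (tendsto_zero_iff_norm_tendsto_zero.1 hV)
    rw [← ofReal_mul, norm_real, norm_mul, norm_mul]
    gcongr
    rw [Real.norm_of_nonneg (by positivity)]
    exact (add_le_add_right (norm_le_lnorm x) 1).trans (le_abs_self _)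
  rw [hHop.eq_multiplier_torusLift he heC1.continuous] at heigen
  obtain ⟨t, ht, hcrit⟩ := exists_critical_point_of_orthonormal
    (E' := fun k ↦ (-(2 * π) : ℂ) • torusLift (he.pd k) (continuous_pd heC1 k))
    (isSelfAdjoint_torusLift he heC1.continuous) (hasDerivAt_torusLift_coordFlow he heC1)
    hdecay hψ (fun n x ↦ hMv (ψ n) x) heigen hμ
  obtain ⟨p, rfl⟩ := isQuotientMap_torusMk.surjective t
  rw [torusLift_torusMk, ofReal_inj] at ht
  refine ht ▸ mem_Thr_of_forall_pd_eq_zero fun k ↦ ?_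
  have hπ : (-(2 * π) : ℂ) ≠ 0 := mod_cast neg_two_pi_ne_zero
  simpa [hπ] using hcrit k

theorem statement7_general (he : Periodic2pi e) (heC1 : ContDiff ℝ 1 e)
    {V : Γd d → ℝ} (hV : Tendsto (fun x ↦ (1 + lnorm x) * V x) cofinite (𝓝 0))
    {Hop Mv : L2 d →L[ℂ] L2 d} (hHop : IsMultiplier e Hop) (hMv : IsMulOp V Mv)
    {Δ : Set ℝ} (hΔ : IsClosed Δ) (hThr : Δ ∩ Thr e = ∅) :
    Module.rank ℂ (Submodule.span ℂ
      {ψ : L2 d | ψ ≠ 0 ∧ ∃ μ ∈ Δ, (Hop + Mv) ψ = (μ : ℂ) • ψ}) < Cardinal.aleph0 := by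
  rw [Module.rank_lt_aleph0_iff]
  by_contra hinf
  have hsymm : ((Hop + Mv : L2 d →L[ℂ] L2 d) : L2 d →ₗ[ℂ] L2 d).IsSymmetric := by
    rw [hHop.eq_multiplier_torusLift he heC1.continuous]
    exact (isSymmetric_multiplier (isSelfAdjoint_torusLift he heC1.continuous)).add
      hMv.isSymmetric
  obtain ⟨ψ, μ, hψ, hμ, heigen⟩ := exists_orthonormal_eigenvectors hsymm (fun _ hv ↦ hv.2) hinf
  have hbound (n : ℕ) : μ n ∈ Metric.closedBall 0 ‖Hop + Mv‖ := by
    have h := (Hop + Mv).le_opNorm (ψ n)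
    rw [← ContinuousLinearMap.coe_coe, heigen n, norm_smul, hψ.1 n] at h
    simpa using h
  obtain ⟨μ₀, -, f, hf, hlim⟩ := tendsto_subseq_of_bounded Metric.isBounded_closedBall hbound
  have hμ₀ : μ₀ ∈ Δ := hΔ.mem_of_tendsto hlim (.of_forall fun n ↦ hμ (f n))
  exact Set.eq_empty_iff_forall_notMem.1 hThr μ₀ ⟨hμ₀, mem_Thr_of_tendsto_eigenvalues he heC1 hV
    hHop hMv (hψ.comp f hf.injective) (fun n ↦ heigen (f n)) hlim⟩

end Lattice

/-- Eigenvalues only accumulate at thresholds.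
If `𝔢` is a `C⁴` dispersion relation satisfying (M) and `Φ_{1,2}(V) < ∞`, then for
every compact `Δ ⊂ ℝ` with `Δ ∩ Thr(𝔢) = ∅` the total multiplicity of the
eigenvalues of `H(𝔢,V)` in `Δ` is finite. -/
theorem statement7 (d : ℕ)
    (e : (Fin d → ℝ) → ℝ) (he : IsDispersion e) (heC4 : ContDiff ℝ 4 e) (heM : CondM e)
    (V : Γd d → ℝ) (hV : Phi 1 2 V < ⊤)
    (Hop Mv : L2 d →L[ℂ] L2 d) (hHop : IsMultiplier e Hop) (hMv : IsMulOp V Mv)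
    (Δ : Set ℝ) (hΔc : IsCompact Δ) (hΔ : Δ ∩ Thr e = ∅) :
    Module.rank ℂ (Submodule.span ℂ
        {ψ : L2 d | ψ ≠ 0 ∧ ∃ μ ∈ Δ, (Hop + Mv) ψ = (μ : ℂ) • ψ}) < Cardinal.aleph0 :=
  statement7_general he.1 (heC4.of_le (by norm_num))
    (tendsto_one_add_lnorm_mul_of_Phi_lt_top two_ne_zero hV) hHop hMv hΔc.isClosed hΔ

end LatSch
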